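/- Let H be a complex separable Hilbert space, (e_j)_{j≥1} an orthonormal basis, (λ_j)_{j≥1} a nondecreasing sequence of positive reals, L(t) a family of symmetric operators from H¹(Γ) to H, ε > 0, τ₀ ∈ ℝ, τ > 0, and φ₀ ∈ H¹(Γ). Let B : [0,∞) → [0,∞) be locally integrable·squared (B² locally integrable). Suppose φ^ε : [τ₀, τ₀+τ] → H is continuous with φ^ε(τ₀) = φ₀, and for each t ∈ (τ₀, τ₀+τ), φ^ε(t) ∈ H²(Γ) and φ^ε has derivative i·L(t)φ^ε(t) − ε·Γφ^ε(t) at t. Suppose φ⁰ : [τ₀, τ₀+τ] → H is continuous with φ⁰(τ₀) = φ₀, for each t ∈ (τ₀, τ₀+τ), φ⁰(t) ∈ H¹(Γ), φ⁰ has derivative i·L(t)φ⁰(t) at t, and ‖φ⁰(τ₀+s)‖₁ ≤ B(s)‖φ₀‖₁ for all s ∈ [0,τ]. Then ‖φ^ε(τ₀+τ) − φ⁰(τ₀+τ)‖² ≤ (ε/2)‖φ₀‖₁² ∫₀^τ B(t)² dt. -/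

import Mathlib

open scoped InnerProductSpace ENNReal
open MeasureTheory

/-- The (squared) homogeneous `H¹(Γ)` norm: `‖ψ‖₁² = Σ_j λ_j |⟨e_j, ψ⟩|² ∈ [0,∞]`. -/
noncomputable def H1normSq {H : Type*} [NormedAddCommGroup H] [InnerProductSpace ℂ H]
    (e : ℕ → H) (lam : ℕ → ℝ) (ψ : H) : ℝ≥0∞ :=
  ∑' j, ENNReal.ofReal (lam j * ‖⟪e j, ψ⟫_ℂ‖ ^ 2)

/-- `ψ ∈ H¹(Γ)`. -/
def MemH1 {H : Type*} [NormedAddCommGroup H] [InnerProductSpace ℂ H]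
    (e : ℕ → H) (lam : ℕ → ℝ) (ψ : H) : Prop :=
  H1normSq e lam ψ ≠ ⊤

/-- `ψ ∈ H²(Γ)`, i.e. `Σ_j λ_j² |⟨e_j, ψ⟩|² < ∞`. -/
def MemH2 {H : Type*} [NormedAddCommGroup H] [InnerProductSpace ℂ H]
    (e : ℕ → H) (lam : ℕ → ℝ) (ψ : H) : Prop :=
  (∑' j, ENNReal.ofReal ((lam j) ^ 2 * ‖⟪e j, ψ⟫_ℂ‖ ^ 2)) ≠ ⊤

/-- `Γψ = Σ_j λ_j ⟨e_j, ψ⟩ e_j` (defined as a `tsum`; meaningful for `ψ ∈ H²(Γ)`). -/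
noncomputable def Gam {H : Type*} [NormedAddCommGroup H] [InnerProductSpace ℂ H]
    [CompleteSpace H] (e : ℕ → H) (lam : ℕ → ℝ) (ψ : H) : H :=
  ∑' j, ((lam j : ℂ) * ⟪e j, ψ⟫_ℂ) • e j

/-!
The difference `u = φ^ε - φ⁰` satisfies `u' = i L u - ε Γ φ^ε`. Symmetry of `L` removes the first
term from `d/dt ‖u‖² = 2 Re ⟪u, u'⟫`, which leaves `-2 ε Re ⟪φ^ε - φ⁰, Γ φ^ε⟫`. Completing the
square in each coordinate gives `Re ⟪x - y, Γ x⟫ ≥ -‖y‖₁² / 4`, hence `d/dt ‖u‖² ≤ (ε / 2) ‖φ⁰‖₁²`: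
only the `H¹` norm of the undamped solution enters. Integrating from `u = 0` gives the estimate.
-/

section General

variable {𝕜 E F ι : Type*} [RCLike 𝕜] [NormedAddCommGroup E] [InnerProductSpace 𝕜 E]
  [SeminormedAddCommGroup F]

lemma hasSum_of_tsum_ofReal_ne_top {f : ι → ℝ} (hf : ∀ i, 0 ≤ f i)
    (h : ∑' i, ENNReal.ofReal (f i) ≠ ⊤) : HasSum f (∑' i, ENNReal.ofReal (f i)).toReal := by
  rw [ENNReal.tsum_toReal_eq fun _ => ENNReal.ofReal_ne_top]
  exact (ENNReal.hasSum_toReal h).congr_fun fun i => (ENNReal.toReal_ofReal (hf i)).symm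

lemma neg_quarter_norm_sq_le_re_inner_sub_left (x y : E) :
    -(1 / 4) * ‖y‖ ^ 2 ≤ RCLike.re ⟪x - y, x⟫_𝕜 := by
  have hcs : RCLike.re ⟪y, x⟫_𝕜 ≤ ‖y‖ * ‖x‖ := re_inner_le_norm y x
  rw [inner_sub_left, map_sub, inner_self_eq_norm_sq]
  nlinarith [sq_nonneg (‖x‖ - ‖y‖ / 2)]

lemma norm_sub_sq_le_two_mul_add (x y : F) : ‖x - y‖ ^ 2 ≤ 2 * (‖x‖ ^ 2 + ‖y‖ ^ 2) := by
  grw [norm_sub_le, add_sq_le]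

lemma summable_smul_iff_of_orthonormal [CompleteSpace E] {v : ι → E} (hv : Orthonormal 𝕜 v)
    {c : ι → 𝕜} : Summable (fun i => c i • v i) ↔ Summable fun i => ‖c i‖ ^ 2 :=
  hv.orthogonalFamily.summable_iff_norm_sq_summable c

variable (𝕜) [NormedSpace ℝ E]

lemma hasDerivAt_norm_sq {f : ℝ → E} {f' : E} {t : ℝ} (hf : HasDerivAt f f' t) :
    HasDerivAt (fun t => ‖f t‖ ^ 2) (2 * RCLike.re ⟪f t, f'⟫_𝕜) t := by
  have hre := RCLike.reCLM.hasFDerivAt.comp_hasDerivAt t (hf.inner 𝕜 hf)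
  simpa [Function.comp_def, inner_self_eq_norm_sq, inner_re_symm (𝕜 := 𝕜) f', two_mul] using hre

lemma norm_sq_sub_norm_sq_le_integral {f f' : ℝ → E} {g : ℝ → ℝ} {a b : ℝ} (hab : a ≤ b)
    (hf : ContinuousOn f (Set.Icc a b)) (hf' : ∀ t ∈ Set.Ioo a b, HasDerivAt f (f' t) t)
    (hg : IntegrableOn g (Set.Icc a b))
    (hle : ∀ t ∈ Set.Ioo a b, 2 * RCLike.re ⟪f t, f' t⟫_𝕜 ≤ g t) :
    ‖f b‖ ^ 2 - ‖f a‖ ^ 2 ≤ ∫ t in a..b, g t :=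
  intervalIntegral.sub_le_integral_of_hasDeriv_right_of_le hab (hf.norm.pow 2)
    (fun t ht => (hasDerivAt_norm_sq 𝕜 (hf' t ht)).hasDerivWithinAt) hg hle

end General

section Sobolev

variable {H : Type*} [NormedAddCommGroup H] [InnerProductSpace ℂ H] {e : ℕ → H} {lam : ℕ → ℝ}
  {x y : H}

lemma re_inner_I_smul_eq_zero (h : ⟪x, y⟫_ℂ = ⟪y, x⟫_ℂ) : (⟪x, Complex.I • y⟫_ℂ).re = 0 := by
  have him : (⟪x, y⟫_ℂ).im = 0 := Complex.conj_eq_iff_im.mp ((inner_conj_symm y x).trans h.symm)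
  simp [him]

lemma MemH1.hasSum_H1normSq (hlam : ∀ j, 0 ≤ lam j) (hx : MemH1 e lam x) :
    HasSum (fun j => lam j * ‖⟪e j, x⟫_ℂ‖ ^ 2) (H1normSq e lam x).toReal :=
  hasSum_of_tsum_ofReal_ne_top (fun j => mul_nonneg (hlam j) (sq_nonneg _)) hx

lemma MemH2.summable (hx : MemH2 e lam x) : Summable fun j => lam j ^ 2 * ‖⟪e j, x⟫_ℂ‖ ^ 2 :=
  (hasSum_of_tsum_ofReal_ne_top (fun _ => by positivity) hx).summable

lemma MemH1.sub (hlam : ∀ j, 0 ≤ lam j) (hx : MemH1 e lam x) (hy : MemH1 e lam y) :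
    MemH1 e lam (x - y) := by
  have hsum := ((hx.hasSum_H1normSq hlam).add (hy.hasSum_H1normSq hlam)).summable.mul_left 2
  refine (Summable.of_nonneg_of_le (fun j => mul_nonneg (hlam j) (sq_nonneg _))
    (fun j => ?_) hsum).tsum_ofReal_ne_top
  calc lam j * ‖⟪e j, x - y⟫_ℂ‖ ^ 2
      ≤ lam j * (2 * (‖⟪e j, x⟫_ℂ‖ ^ 2 + ‖⟪e j, y⟫_ℂ‖ ^ 2)) := by
        rw [inner_sub_right]
        exact mul_le_mul_of_nonneg_left (norm_sub_sq_le_two_mul_add _ _) (hlam j)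
    _ = 2 * (lam j * ‖⟪e j, x⟫_ℂ‖ ^ 2 + lam j * ‖⟪e j, y⟫_ℂ‖ ^ 2) := by ring

lemma MemH2.memH1 (he : Orthonormal ℂ e) (hlam : ∀ j, 0 ≤ lam j) (hx : MemH2 e lam x) :
    MemH1 e lam x := by
  have hsum := (he.inner_products_summable x).add hx.summable
  refine (Summable.of_nonneg_of_le (fun j => mul_nonneg (hlam j) (sq_nonneg _))
    (fun j => ?_) hsum).tsum_ofReal_ne_top
  have hle : lam j ≤ 1 + lam j ^ 2 := by nlinarith [sq_nonneg (lam j - 1)]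
  calc lam j * ‖⟪e j, x⟫_ℂ‖ ^ 2 ≤ (1 + lam j ^ 2) * ‖⟪e j, x⟫_ℂ‖ ^ 2 := by gcongr
    _ = ‖⟪e j, x⟫_ℂ‖ ^ 2 + lam j ^ 2 * ‖⟪e j, x⟫_ℂ‖ ^ 2 := by ring

variable [CompleteSpace H]

lemma hasSum_Gam (he : Orthonormal ℂ e) (hx : MemH2 e lam x) :
    HasSum (fun j => ((lam j : ℂ) * ⟪e j, x⟫_ℂ) • e j) (Gam e lam x) := by
  refine ((summable_smul_iff_of_orthonormal he).mpr (hx.summable.congr fun j => ?_)).hasSum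
  simp [mul_pow]

lemma hasSum_re_inner_Gam (he : Orthonormal ℂ e) (hx : MemH2 e lam x) (y : H) :
    HasSum (fun j => lam j * (⟪⟪e j, y⟫_ℂ, ⟪e j, x⟫_ℂ⟫_ℂ).re) (⟪y, Gam e lam x⟫_ℂ).re := by
  refine (Complex.hasSum_re ((hasSum_Gam he hx).mapL (innerSL ℂ y))).congr_fun fun j => ?_
  simp [mul_assoc]

lemma neg_quarter_H1normSq_le_re_inner_Gam (he : Orthonormal ℂ e) (hlam : ∀ j, 0 ≤ lam j)
    (hx : MemH2 e lam x) (hy : MemH1 e lam y) :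
    -(1 / 4) * (H1normSq e lam y).toReal ≤ (⟪x - y, Gam e lam x⟫_ℂ).re := by
  refine hasSum_le (fun j => ?_) ((hy.hasSum_H1normSq hlam).mul_left _)
    (hasSum_re_inner_Gam he hx (x - y))
  rw [inner_sub_right, mul_left_comm]
  exact mul_le_mul_of_nonneg_left (neg_quarter_norm_sq_le_re_inner_sub_left (𝕜 := ℂ) _ _) (hlam j)

lemma two_mul_re_inner_damped_sub_free_le (he : Orthonormal ℂ e) (hlam : ∀ j, 0 ≤ lam j)
    {T : H →ₗ[ℂ] H}
    (hT : ∀ u v : H, MemH1 e lam u → MemH1 e lam v → ⟪T u, v⟫_ℂ = ⟪u, T v⟫_ℂ)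
    {ε : ℝ} (hε : 0 ≤ ε) (hx : MemH2 e lam x) (hy : MemH1 e lam y) :
    2 * (⟪x - y, (Complex.I • T x - ε • Gam e lam x) - Complex.I • T y⟫_ℂ).re ≤
      ε / 2 * (H1normSq e lam y).toReal := by
  have hsub : MemH1 e lam (x - y) := (hx.memH1 he hlam).sub hlam hy
  have hskew : (⟪x - y, Complex.I • T (x - y)⟫_ℂ).re = 0 :=
    re_inner_I_smul_eq_zero (hT _ _ hsub hsub).symm
  have hdamp := neg_quarter_H1normSq_le_re_inner_Gam he hlam hx hy
  have hsplit : (Complex.I • T x - ε • Gam e lam x) - Complex.I • T y =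
      Complex.I • T (x - y) - (ε : ℂ) • Gam e lam x := by
    rw [map_sub, smul_sub, Complex.coe_smul]
    abel
  rw [hsplit, inner_sub_right, Complex.sub_re, hskew, inner_smul_right, Complex.re_ofReal_mul]
  linarith [mul_le_mul_of_nonneg_left hdamp hε]

end Sobolev

theorem statement4_general {H : Type*} [NormedAddCommGroup H] [InnerProductSpace ℂ H]
    [CompleteSpace H] {e : ℕ → H} (he : Orthonormal ℂ e) {lam : ℕ → ℝ} (hlam : ∀ j, 0 ≤ lam j)
    {L : ℝ → H →ₗ[ℂ] H}
    (hL : ∀ t : ℝ, ∀ x y : H, MemH1 e lam x → MemH1 e lam y → ⟪L t x, y⟫_ℂ = ⟪x, L t y⟫_ℂ)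
    {ε : ℝ} (hε : 0 ≤ ε) {τ₀ τ : ℝ} (hτ : 0 ≤ τ) {φ₀ : H} (hφ₀ : MemH1 e lam φ₀)
    {B : ℝ → ℝ} (hB : IntegrableOn (fun t => B t ^ 2) (Set.Icc 0 τ)) {φε : ℝ → H}
    (hφεcont : ContinuousOn φε (Set.Icc τ₀ (τ₀ + τ))) (hφεinit : φε τ₀ = φ₀)
    (hφεH2 : ∀ t ∈ Set.Ioo τ₀ (τ₀ + τ), MemH2 e lam (φε t))
    (hφεderiv : ∀ t ∈ Set.Ioo τ₀ (τ₀ + τ),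
      HasDerivAt φε (Complex.I • L t (φε t) - ε • Gam e lam (φε t)) t)
    {φ0 : ℝ → H} (hφ0cont : ContinuousOn φ0 (Set.Icc τ₀ (τ₀ + τ))) (hφ0init : φ0 τ₀ = φ₀)
    (hφ0deriv : ∀ t ∈ Set.Ioo τ₀ (τ₀ + τ), HasDerivAt φ0 (Complex.I • L t (φ0 t)) t)
    (hφ0bound : ∀ s ∈ Set.Ioo 0 τ,
      H1normSq e lam (φ0 (τ₀ + s)) ≤ ENNReal.ofReal (B s ^ 2) * H1normSq e lam φ₀) :
    ‖φε (τ₀ + τ) - φ0 (τ₀ + τ)‖ ^ 2 ≤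
      ε / 2 * (H1normSq e lam φ₀).toReal * ∫ t in (0 : ℝ)..τ, B t ^ 2 := by
  have hIcc : Set.MapsTo (fun s => τ₀ + s) (Set.Icc 0 τ) (Set.Icc τ₀ (τ₀ + τ)) := fun s hs =>
    ⟨le_add_of_nonneg_right hs.1, add_le_add_right hs.2 τ₀⟩
  have hIoo : Set.MapsTo (fun s => τ₀ + s) (Set.Ioo 0 τ) (Set.Ioo τ₀ (τ₀ + τ)) := fun s hs =>
    ⟨lt_add_of_pos_right _ hs.1, add_lt_add_right hs.2 τ₀⟩
  have hcont : ContinuousOn (fun s => φε (τ₀ + s) - φ0 (τ₀ + s)) (Set.Icc 0 τ) :=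
    (hφεcont.sub hφ0cont).comp (by fun_prop) hIcc
  have hderiv (s) (hs : s ∈ Set.Ioo 0 τ) :=
    ((hφεderiv _ (hIoo hs)).sub (hφ0deriv _ (hIoo hs))).comp_const_add τ₀ s
  have henergy := norm_sq_sub_norm_sq_le_integral ℂ hτ hcont hderiv
    (hB.const_mul (ε / 2 * (H1normSq e lam φ₀).toReal)) fun s hs => ?_
  · simpa [hφεinit, hφ0init] using henergy
  · have hfin : ENNReal.ofReal (B s ^ 2) * H1normSq e lam φ₀ ≠ ⊤ :=
      ENNReal.mul_ne_top ENNReal.ofReal_ne_top hφ₀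
    have hφ0H1 : MemH1 e lam (φ0 (τ₀ + s)) := ne_top_of_le_ne_top hfin (hφ0bound s hs)
    have hnorm := ENNReal.toReal_mono hfin (hφ0bound s hs)
    rw [ENNReal.toReal_mul, ENNReal.toReal_ofReal (sq_nonneg _)] at hnorm
    calc _ ≤ ε / 2 * (H1normSq e lam (φ0 (τ₀ + s))).toReal :=
          two_mul_re_inner_damped_sub_free_le he hlam (hL _) hε (hφεH2 _ (hIoo hs)) hφ0H1
      _ ≤ ε / 2 * (B s ^ 2 * (H1normSq e lam φ₀).toReal) := by gcongr
      _ = ε / 2 * (H1normSq e lam φ₀).toReal * B s ^ 2 := by ring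

/-- Lemma `sdist`: comparison of the diffusive evolution with the free
evolution: `‖φ^ε(τ₀+τ) − φ⁰(τ₀+τ)‖² ≤ (ε/2)‖φ₀‖₁² ∫₀^τ B(t)² dt`. -/
theorem statement4 {H : Type*} [NormedAddCommGroup H] [InnerProductSpace ℂ H]
    [CompleteSpace H] [TopologicalSpace.SeparableSpace H]
    (e : HilbertBasis ℕ ℂ H) (lam : ℕ → ℝ)
    (hlam_pos : ∀ j, 0 < lam j) (hlam_mono : Monotone lam)
    (L : ℝ → H →ₗ[ℂ] H)
    (hLsym : ∀ t : ℝ, ∀ x y : H, MemH1 (⇑e) lam x → MemH1 (⇑e) lam y →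
      ⟪L t x, y⟫_ℂ = ⟪x, L t y⟫_ℂ)
    (ε : ℝ) (hε : 0 < ε) (τ₀ τ : ℝ) (hτ : 0 < τ)
    (φ₀ : H) (hφ₀ : MemH1 (⇑e) lam φ₀)
    (B : ℝ → ℝ) (hBnonneg : ∀ s, 0 ≤ B s)
    (hBsqloc : LocallyIntegrable (fun t => B t ^ 2) volume)
    (φε : ℝ → H)
    (hφεcont : ContinuousOn φε (Set.Icc τ₀ (τ₀ + τ))) (hφεinit : φε τ₀ = φ₀)
    (hφεH2 : ∀ t ∈ Set.Ioo τ₀ (τ₀ + τ), MemH2 (⇑e) lam (φε t))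
    (hφεderiv : ∀ t ∈ Set.Ioo τ₀ (τ₀ + τ),
      HasDerivAt φε (Complex.I • L t (φε t) - ε • Gam (⇑e) lam (φε t)) t)
    (φ0 : ℝ → H)
    (hφ0cont : ContinuousOn φ0 (Set.Icc τ₀ (τ₀ + τ))) (hφ0init : φ0 τ₀ = φ₀)
    (hφ0H1 : ∀ t ∈ Set.Ioo τ₀ (τ₀ + τ), MemH1 (⇑e) lam (φ0 t))
    (hφ0deriv : ∀ t ∈ Set.Ioo τ₀ (τ₀ + τ),
      HasDerivAt φ0 (Complex.I • L t (φ0 t)) t)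
    (hφ0bound : ∀ s ∈ Set.Icc (0 : ℝ) τ,
      H1normSq (⇑e) lam (φ0 (τ₀ + s)) ≤ ENNReal.ofReal (B s ^ 2) * H1normSq (⇑e) lam φ₀) :
    ‖φε (τ₀ + τ) - φ0 (τ₀ + τ)‖ ^ 2 ≤
      ε / 2 * (H1normSq (⇑e) lam φ₀).toReal * ∫ t in (0 : ℝ)..τ, B t ^ 2 :=
  statement4_general e.orthonormal (fun j => (hlam_pos j).le) hLsym hε.le hτ.le hφ₀
    (hBsqloc.integrableOn_isCompact isCompact_Icc) hφεcont hφεinit hφεH2 hφεderiv hφ0cont hφ0init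
    hφ0deriv fun s hs => hφ0bound s (Set.Ioo_subset_Icc_self hs)
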